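/- arXiv:2306.07018 — 2 statements merged into one kernel-verified Lean document; each statement's English description precedes it below -/
import Mathlib

section
/- Under the IV assumptions (Independence, Relevance, Monotonicity, Exclusion), the first stage for D∧ satisfies ΔE[D∧|Z] = μ({C1,C2}) + μ({C1,A2}) + μ({A1,C2}). (Lemma 1.3) -/
open MeasureTheory ProbabilityTheory

noncomputable section

variable {Ω : Type*} [MeasurableSpace Ω]

/-- Observed first-part treatment: `D1 = D1(1)·Z + D1(0)·(1−Z)`. -/
def obsD1 (Z : Ω → ℝ) (D1 : Bool → Ω → ℝ) (ω : Ω) : ℝ :=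
  D1 true ω * Z ω + D1 false ω * (1 - Z ω)

/-- Observed second-part treatment. -/
def obsD2 (Z : Ω → ℝ) (D1 : Bool → Ω → ℝ) (D2 : Bool → Bool → Ω → ℝ) (ω : Ω) : ℝ :=
  (D2 true true ω * obsD1 Z D1 ω + D2 true false ω * (1 - obsD1 Z D1 ω)) * Z ω +
  (D2 false true ω * obsD1 Z D1 ω + D2 false false ω * (1 - obsD1 Z D1 ω)) * (1 - Z ω)

/-- Summary treatment `D∧ = D1·D2`. -/
def obsDand (Z : Ω → ℝ) (D1 : Bool → Ω → ℝ) (D2 : Bool → Bool → Ω → ℝ) (ω : Ω) : ℝ :=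
  obsD1 Z D1 ω * obsD2 Z D1 D2 ω

/-- Summary treatment `D∨ = D1 + D2 − D1·D2`. -/
def obsDor (Z : Ω → ℝ) (D1 : Bool → Ω → ℝ) (D2 : Bool → Bool → Ω → ℝ) (ω : Ω) : ℝ :=
  obsD1 Z D1 ω + obsD2 Z D1 D2 ω - obsD1 Z D1 ω * obsD2 Z D1 D2 ω

/-- Observed outcome `Y = Σ_{d1,d2} Y(Z,d1,d2)·1{D1=d1, D2=d2}`, written out using that the
observed treatments and the instrument are {0,1}-valued. The first index of `Yp` is `z`, the
second is `d1`, the third is `d2`. -/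
def obsY (Z : Ω → ℝ) (D1 : Bool → Ω → ℝ) (D2 : Bool → Bool → Ω → ℝ)
    (Yp : Bool → Bool → Bool → Ω → ℝ) (ω : Ω) : ℝ :=
  (Yp true true true ω * obsD1 Z D1 ω * obsD2 Z D1 D2 ω +
   Yp true false true ω * (1 - obsD1 Z D1 ω) * obsD2 Z D1 D2 ω +
   Yp true true false ω * obsD1 Z D1 ω * (1 - obsD2 Z D1 D2 ω) +
   Yp true false false ω * (1 - obsD1 Z D1 ω) * (1 - obsD2 Z D1 D2 ω)) * Z ω +
  (Yp false true true ω * obsD1 Z D1 ω * obsD2 Z D1 D2 ω +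
   Yp false false true ω * (1 - obsD1 Z D1 ω) * obsD2 Z D1 D2 ω +
   Yp false true false ω * obsD1 Z D1 ω * (1 - obsD2 Z D1 D2 ω) +
   Yp false false false ω * (1 - obsD1 Z D1 ω) * (1 - obsD2 Z D1 D2 ω)) * (1 - Z ω)

/-- `ΔE[A|Z] := E[A | Z = 1] − E[A | Z = 0]`, expectations under conditional measures. -/
def dE (μ : Measure Ω) (Z A : Ω → ℝ) : ℝ :=
  (∫ ω, A ω ∂(μ[|Z ⁻¹' {1}])) - (∫ ω, A ω ∂(μ[|Z ⁻¹' {0}]))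

/-- The full-complier event `{C1,C2}`. -/
def CCev (D1 : Bool → Ω → ℝ) (D2 : Bool → Bool → Ω → ℝ) : Set Ω :=
  {ω | D1 true ω - D1 false ω = 1 ∧ D2 true true ω - D2 false false ω = 1}

/-- The mover event `{C1,N2}`. -/
def CNev (D1 : Bool → Ω → ℝ) (D2 : Bool → Bool → Ω → ℝ) : Set Ω :=
  {ω | D1 true ω - D1 false ω = 1 ∧ D2 true true ω = 0 ∧ D2 false false ω = 0}

/-- The mover event `{C1,A2}`. -/
def CAev (D1 : Bool → Ω → ℝ) (D2 : Bool → Bool → Ω → ℝ) : Set Ω :=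
  {ω | D1 true ω - D1 false ω = 1 ∧ D2 true true ω = 1 ∧ D2 false false ω = 1}

/-- The mover event `{N1,C2}`. -/
def NCev (D1 : Bool → Ω → ℝ) (D2 : Bool → Bool → Ω → ℝ) : Set Ω :=
  {ω | D1 true ω = 0 ∧ D1 false ω = 0 ∧ D2 true false ω - D2 false false ω = 1}

/-- The mover event `{A1,C2}`. -/
def ACev (D1 : Bool → Ω → ℝ) (D2 : Bool → Bool → Ω → ℝ) : Set Ω :=
  {ω | D1 true ω = 1 ∧ D1 false ω = 1 ∧ D2 true true ω - D2 false true ω = 1}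

/-!
Independence turns `ΔE[D∧|Z]` into `E[D∧(1)] − E[D∧(0)]`, where `D∧(z) = D1(z)·D2(z,D1(z))` equals
`D1(z)·D2(z,1)` because `D1(z)` is binary. The discrete product rule
`D∧(1) − D∧(0) = (D1(1) − D1(0))·D2(1,1) + D1(0)·(D2(1,1) − D2(0,1))`
separates the compliers from the always takers of the first part. By monotonicity the first term
is the indicator of a `D1`-complier with `D2(1,1) = 1`, that is of `{C1,C2} ∪ {C1,A2}`, and the
second one is the indicator of `{A1,C2}`.
-/

section Conditioning

variable {α : Type*} {μ : Measure Ω}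

theorem measure_preimage_singleton_ne_zero {X : Ω → α} {a b : α}
    (hX : ∀ ω, X ω = a ∨ X ω = b) (hb : μ (X ⁻¹' {b}) ≠ μ Set.univ) : μ (X ⁻¹' {a}) ≠ 0 := by
  intro ha
  have hsub : (X ⁻¹' {b})ᶜ ⊆ X ⁻¹' {a} := fun ω hω => (hX ω).resolve_right hω
  exact hb (measure_of_measure_compl_eq_zero (measure_mono_null hsub ha))

theorem identDistrib_cond_of_indepFun {β : Type*} [MeasurableSpace α] [MeasurableSpace β]
    [IsFiniteMeasure μ] {X : Ω → α} {Z : Ω → β} (hX : AEMeasurable X μ) (hXZ : IndepFun X Z μ)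
    {s : Set β} (hs : MeasurableSet s) (hZs : μ (Z ⁻¹' s) ≠ 0) :
    IdentDistrib X X (μ[|Z ⁻¹' s]) μ := by
  have hXs : AEMeasurable X (μ[|Z ⁻¹' s]) := hX.mono_ac cond_absolutelyContinuous
  refine ⟨hXs, hX, Measure.ext fun t ht => ?_⟩
  rw [Measure.map_apply_of_aemeasurable hXs ht, Measure.map_apply_of_aemeasurable hX ht,
    ProbabilityTheory.cond, Measure.smul_apply,
    Measure.restrict_apply₀ (hX.restrict.nullMeasurable ht),
    hXZ.measure_inter_preimage_eq_mul t s ht hs, smul_eq_mul, mul_comm (μ (X ⁻¹' t)), ← mul_assoc,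
    ENNReal.inv_mul_cancel hZs (measure_ne_top μ _), one_mul]

theorem integral_cond_eq_of_indepFun {β E : Type*} [MeasurableSpace β]
    [NormedAddCommGroup E] [NormedSpace ℝ E] [MeasurableSpace E] [BorelSpace E]
    [IsFiniteMeasure μ] {Z : Ω → β} {A B : Ω → E} (hZ : Measurable Z) (hB : AEMeasurable B μ)
    (hBZ : IndepFun B Z μ) {s : Set β} (hs : MeasurableSet s) (hZs : μ (Z ⁻¹' s) ≠ 0)
    (hAB : ∀ ω, Z ω ∈ s → A ω = B ω) :
    ∫ ω, A ω ∂(μ[|Z ⁻¹' s]) = ∫ ω, B ω ∂μ :=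
  calc ∫ ω, A ω ∂(μ[|Z ⁻¹' s])
    _ = ∫ ω, B ω ∂(μ[|Z ⁻¹' s]) := integral_congr_ae (ae_cond_of_forall_mem (hZ hs) hAB)
    _ = ∫ ω, B ω ∂μ := (identDistrib_cond_of_indepFun hB hBZ hs hZs).integral_eq

theorem dE_eq_integral_sub_integral [IsFiniteMeasure μ] {Z A : Ω → ℝ} {B : Bool → Ω → ℝ}
    (hZ : Measurable Z) (hZ1 : μ (Z ⁻¹' {1}) ≠ 0) (hZ0 : μ (Z ⁻¹' {0}) ≠ 0)
    (hB : ∀ z, AEMeasurable (B z) μ) (hBZ : ∀ z, IndepFun (B z) Z μ)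
    (hA1 : ∀ ω, Z ω = 1 → A ω = B true ω) (hA0 : ∀ ω, Z ω = 0 → A ω = B false ω) :
    dE μ Z A = ∫ ω, B true ω ∂μ - ∫ ω, B false ω ∂μ := by
  rw [dE, integral_cond_eq_of_indepFun hZ (hB true) (hBZ true) (measurableSet_singleton 1) hZ1 hA1,
    integral_cond_eq_of_indepFun hZ (hB false) (hBZ false) (measurableSet_singleton 0) hZ0 hA0]

end Conditioning

section Pointwise

omit [MeasurableSpace Ω]

variable {Z : Ω → ℝ} {D1 : Bool → Ω → ℝ} {D2 : Bool → Bool → Ω → ℝ} {ω : Ω}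

theorem sub_eq_zero_or_eq_one {a b : ℝ} (ha : a = 0 ∨ a = 1) (hb : b = 0 ∨ b = 1) (hba : b ≤ a) :
    a - b = 0 ∨ a - b = 1 := by
  rcases ha with rfl | rfl <;> rcases hb with rfl | rfl <;> grind

/-- The potential summary treatment `D∧(z) = D1(z)·D2(z,D1(z))`, the value that `D∧` takes when the
instrument is set to `z`. It is encoded as `D1(z)·D2(z,1)`, which is the same for binary `D1(z)`. -/
def potDand (D1 : Bool → Ω → ℝ) (D2 : Bool → Bool → Ω → ℝ) (z : Bool) (ω : Ω) : ℝ :=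
  D1 z ω * D2 z true ω

theorem obsDand_of_instrument_eq_one (hD1 : D1 true ω = 0 ∨ D1 true ω = 1) (hZ : Z ω = 1) :
    obsDand Z D1 D2 ω = potDand D1 D2 true ω := by
  rcases hD1 with h | h <;> simp [obsDand, obsD1, obsD2, potDand, hZ, h]

theorem obsDand_of_instrument_eq_zero (hD1 : D1 false ω = 0 ∨ D1 false ω = 1) (hZ : Z ω = 0) :
    obsDand Z D1 D2 ω = potDand D1 D2 false ω := by
  rcases hD1 with h | h <;> simp [obsDand, obsD1, obsD2, potDand, hZ, h]

theorem indicator_CCev_add_indicator_CAev (hD1 : ∀ z, D1 z ω = 0 ∨ D1 z ω = 1)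
    (hD2 : ∀ z, D2 z z ω = 0 ∨ D2 z z ω = 1) (hmono : D1 false ω ≤ D1 true ω) :
    (CCev D1 D2).indicator 1 ω + (CAev D1 D2).indicator 1 ω =
      (D1 true ω - D1 false ω) * D2 true true ω := by
  rcases sub_eq_zero_or_eq_one (hD1 true) (hD1 false) hmono with hd | hd
  · simp [CCev, CAev, hd]
  · rcases hD2 true with h1 | h1 <;> rcases hD2 false with h0 | h0 <;>
      norm_num [CCev, CAev, Set.indicator, hd, h1, h0]

theorem indicator_ACev (hD1 : ∀ z, D1 z ω = 0 ∨ D1 z ω = 1)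
    (hD2 : ∀ z, D2 z true ω = 0 ∨ D2 z true ω = 1) (hmono1 : D1 false ω ≤ D1 true ω)
    (hmono2 : D1 false ω = 1 → D2 false true ω ≤ D2 true true ω) :
    (ACev D1 D2).indicator 1 ω = D1 false ω * (D2 true true ω - D2 false true ω) := by
  rcases hD1 false with h0 | h0
  · simp [ACev, h0]
  · have h1 : D1 true ω = 1 := (hD1 true).resolve_left (by linarith)
    rcases sub_eq_zero_or_eq_one (hD2 true) (hD2 false) (hmono2 h0) with hd | hd <;>
      simp [ACev, h0, h1, hd]

theorem potDand_sub_potDand (hD1 : ∀ z, D1 z ω = 0 ∨ D1 z ω = 1)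
    (hD2 : ∀ z d, D2 z d ω = 0 ∨ D2 z d ω = 1) (hmono1 : D1 false ω ≤ D1 true ω)
    (hmono2 : D1 false ω = 1 → D2 false true ω ≤ D2 true true ω) :
    potDand D1 D2 true ω - potDand D1 D2 false ω =
      (CCev D1 D2).indicator 1 ω + (CAev D1 D2).indicator 1 ω + (ACev D1 D2).indicator 1 ω := by
  rw [indicator_CCev_add_indicator_CAev hD1 (fun z => hD2 z z) hmono1,
    indicator_ACev hD1 (fun z => hD2 z true) hmono1 hmono2, potDand, potDand]
  ring

theorem D2_le_D2_of_alwaysTaker (hD1 : D1 true ω = 0 ∨ D1 true ω = 1)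
    (hmono1 : D1 false ω ≤ D1 true ω)
    (hmono2 : D2 false true ω * D1 false ω + D2 false false ω * (1 - D1 false ω) ≤
      D2 true true ω * D1 true ω + D2 true false ω * (1 - D1 true ω))
    (hA : D1 false ω = 1) : D2 false true ω ≤ D2 true true ω := by
  have h1 : D1 true ω = 1 := hD1.resolve_left (by linarith)
  simpa [hA, h1] using hmono2

end Pointwise

section FirstStage

variable {μ : Measure Ω} {D1 : Bool → Ω → ℝ} {D2 : Bool → Bool → Ω → ℝ}

theorem measurable_potDand {z : Bool} (hD1 : Measurable (D1 z)) (hD2 : Measurable (D2 z true)) :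
    Measurable (potDand D1 D2 z) :=
  hD1.mul hD2

theorem indepFun_potDand {γ : Type*} [MeasurableSpace γ] {W : Ω → γ} {Z : Ω → ℝ}
    (hindep : IndepFun (fun ω => ((fun z => D1 z ω), (fun z d => D2 z d ω), W ω)) Z μ)
    (z : Bool) : IndepFun (potDand D1 D2 z) Z μ :=
  hindep.comp (φ := fun p : (Bool → ℝ) × (Bool → Bool → ℝ) × γ => p.1 z * p.2.1 z true)
    (by fun_prop) measurable_id

theorem integrable_potDand [IsFiniteMeasure μ] {z : Bool}
    (hmeas : Measurable (potDand D1 D2 z)) (hD1 : ∀ ω, D1 z ω = 0 ∨ D1 z ω = 1)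
    (hD2 : ∀ ω, D2 z true ω = 0 ∨ D2 z true ω = 1) : Integrable (potDand D1 D2 z) μ := by
  refine .of_bound hmeas.aestronglyMeasurable 1 (.of_forall fun ω => ?_)
  rcases hD1 ω with h1 | h1 <;> rcases hD2 ω with h2 | h2 <;> simp [potDand, h1, h2]

theorem measurableSet_CCev (hD1 : ∀ z, Measurable (D1 z)) (hD2 : ∀ z d, Measurable (D2 z d)) :
    MeasurableSet (CCev D1 D2) :=
  (measurableSet_eq_fun ((hD1 true).sub (hD1 false)) measurable_const).inter
    (measurableSet_eq_fun ((hD2 true true).sub (hD2 false false)) measurable_const)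

theorem measurableSet_CAev (hD1 : ∀ z, Measurable (D1 z)) (hD2 : ∀ z d, Measurable (D2 z d)) :
    MeasurableSet (CAev D1 D2) :=
  (measurableSet_eq_fun ((hD1 true).sub (hD1 false)) measurable_const).inter
    ((measurableSet_eq_fun (hD2 true true) measurable_const).inter
      (measurableSet_eq_fun (hD2 false false) measurable_const))

theorem measurableSet_ACev (hD1 : ∀ z, Measurable (D1 z)) (hD2 : ∀ z d, Measurable (D2 z d)) :
    MeasurableSet (ACev D1 D2) :=
  (measurableSet_eq_fun (hD1 true) measurable_const).inter
    ((measurableSet_eq_fun (hD1 false) measurable_const).inter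
      (measurableSet_eq_fun ((hD2 true true).sub (hD2 false true)) measurable_const))

theorem integral_potDand_sub_integral_potDand [IsFiniteMeasure μ]
    (hD1meas : ∀ z, Measurable (D1 z)) (hD2meas : ∀ z d, Measurable (D2 z d))
    (hD1 : ∀ z ω, D1 z ω = 0 ∨ D1 z ω = 1) (hD2 : ∀ z d ω, D2 z d ω = 0 ∨ D2 z d ω = 1)
    (hmono1 : ∀ᵐ ω ∂μ, D1 false ω ≤ D1 true ω)
    (hmono2 : ∀ᵐ ω ∂μ, D1 false ω = 1 → D2 false true ω ≤ D2 true true ω) :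
    ∫ ω, potDand D1 D2 true ω ∂μ - ∫ ω, potDand D1 D2 false ω ∂μ =
      μ.real (CCev D1 D2) + μ.real (CAev D1 D2) + μ.real (ACev D1 D2) := by
  have hCC := measurableSet_CCev hD1meas hD2meas
  have hCA := measurableSet_CAev hD1meas hD2meas
  have hAC := measurableSet_ACev hD1meas hD2meas
  have hpot z : Integrable (potDand D1 D2 z) μ :=
    integrable_potDand (measurable_potDand (hD1meas z) (hD2meas z true)) (hD1 z) (hD2 z true)
  have hind {S : Set Ω} (hS : MeasurableSet S) : Integrable (S.indicator (1 : Ω → ℝ)) μ :=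
    (integrable_const 1).indicator hS
  calc ∫ ω, potDand D1 D2 true ω ∂μ - ∫ ω, potDand D1 D2 false ω ∂μ
    _ = ∫ ω, (potDand D1 D2 true ω - potDand D1 D2 false ω) ∂μ :=
      (integral_sub (hpot true) (hpot false)).symm
    _ = ∫ ω, ((CCev D1 D2).indicator 1 ω + (CAev D1 D2).indicator 1 ω +
          (ACev D1 D2).indicator 1 ω) ∂μ := by
      refine integral_congr_ae ?_
      filter_upwards [hmono1, hmono2] with ω h1 h2
      exact potDand_sub_potDand (hD1 · ω) (hD2 · · ω) h1 h2
    _ = μ.real (CCev D1 D2) + μ.real (CAev D1 D2) + μ.real (ACev D1 D2) := by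
      rw [integral_add ((hind hCC).fun_add (hind hCA)) (hind hAC),
        integral_add (hind hCC) (hind hCA), integral_indicator_one hCC,
        integral_indicator_one hCA, integral_indicator_one hAC]

theorem stmt_2_general [IsProbabilityMeasure μ] {Z : Ω → ℝ} (hZmeas : Measurable Z)
    (hD1meas : ∀ z, Measurable (D1 z)) (hD2meas : ∀ z d, Measurable (D2 z d))
    (hZ1 : μ (Z ⁻¹' {1}) ≠ 0) (hZ0 : μ (Z ⁻¹' {0}) ≠ 0)
    (hD1 : ∀ z ω, D1 z ω = 0 ∨ D1 z ω = 1) (hD2 : ∀ z d ω, D2 z d ω = 0 ∨ D2 z d ω = 1)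
    (hindep : ∀ z, IndepFun (potDand D1 D2 z) Z μ)
    (hmono1 : ∀ᵐ ω ∂μ, D1 false ω ≤ D1 true ω)
    (hmono2 : ∀ᵐ ω ∂μ, D1 false ω = 1 → D2 false true ω ≤ D2 true true ω) :
    dE μ Z (obsDand Z D1 D2) =
      μ.real (CCev D1 D2) + μ.real (CAev D1 D2) + μ.real (ACev D1 D2) := by
  rw [← integral_potDand_sub_integral_potDand hD1meas hD2meas hD1 hD2 hmono1 hmono2]
  exact dE_eq_integral_sub_integral hZmeas hZ1 hZ0
    (fun z => (measurable_potDand (hD1meas z) (hD2meas z true)).aemeasurable) hindep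
    (fun ω => obsDand_of_instrument_eq_one (hD1 true ω))
    (fun ω => obsDand_of_instrument_eq_zero (hD1 false ω))

end FirstStage

theorem stmt_2
    (μ : Measure Ω) [IsProbabilityMeasure μ]
    (Z : Ω → ℝ) (D1 : Bool → Ω → ℝ) (D2 : Bool → Bool → Ω → ℝ)
    (Yp : Bool → Bool → Bool → Ω → ℝ)
    (hZmeas : Measurable Z)
    (hD1meas : ∀ b, Measurable (D1 b))
    (hD2meas : ∀ b b', Measurable (D2 b b'))
    (hYmeas : ∀ z d1 d2, Measurable (Yp z d1 d2))
    (hYint : ∀ z d1 d2, Integrable (Yp z d1 d2) μ)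
    (hZ01 : ∀ ω, Z ω = 0 ∨ Z ω = 1)
    (hZpos : 0 < μ (Z ⁻¹' {1})) (hZlt : μ (Z ⁻¹' {1}) < 1)
    (hD101 : ∀ b ω, D1 b ω = 0 ∨ D1 b ω = 1)
    (hD201 : ∀ b b' ω, D2 b b' ω = 0 ∨ D2 b b' ω = 1)
    (hindep : IndepFun
      (fun ω => ((fun b => D1 b ω), (fun b b' => D2 b b' ω), (fun z d1 d2 => Yp z d1 d2 ω))) Z μ)
    (hrel1 : 0 < dE μ Z (obsD1 Z D1))
    (hrel2 : 0 < dE μ Z (obsD2 Z D1 D2))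
    (hrelAnd : 0 < dE μ Z (obsDand Z D1 D2))
    (hrelOr : 0 < dE μ Z (obsDor Z D1 D2))
    (hmono1 : ∀ᵐ ω ∂μ, D1 false ω ≤ D1 true ω)
    (hmono2 : ∀ᵐ ω ∂μ,
      D2 false true ω * D1 false ω + D2 false false ω * (1 - D1 false ω) ≤
        D2 true true ω * D1 true ω + D2 true false ω * (1 - D1 true ω))
    (hexcl : ∀ d1 d2, ∀ᵐ ω ∂μ, Yp true d1 d2 ω = Yp false d1 d2 ω) :
    dE μ Z (obsDand Z D1 D2) =
      (μ (CCev D1 D2)).toReal + (μ (CAev D1 D2)).toReal + (μ (ACev D1 D2)).toReal := by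
  have hZ0 : μ (Z ⁻¹' {0}) ≠ 0 :=
    measure_preimage_singleton_ne_zero hZ01 (by simpa using hZlt.ne)
  have hmono_alwaysTaker : ∀ᵐ ω ∂μ, D1 false ω = 1 → D2 false true ω ≤ D2 true true ω := by
    filter_upwards [hmono1, hmono2] with ω h1 h2 using D2_le_D2_of_alwaysTaker (hD101 true ω) h1 h2
  exact stmt_2_general hZmeas hD1meas hD2meas hZpos.ne' hZ0 hD101 hD201 (indepFun_potDand hindep)
    hmono1 hmono_alwaysTaker
end
end

section
/- Under Independence, Relevance, Monotonicity, and the Double exclusion restriction, the first stage for D2 satisfies ΔE[D2|Z] = μ({C1,C2}). (Lemma 2.2) -/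
open MeasureTheory ProbabilityTheory

noncomputable section

variable {Ω : Type*} [MeasurableSpace Ω]

/-!
Since `Z` is independent of the potential treatments, `ΔE[D2|Z]` is the unconditional mean of
`D2(1, D1(1)) − D2(0, D1(0))`. Under double exclusion this difference factors as
`(D1(1) − D1(0)) * (D2(1) − D2(0))`. The first factor is 0 or 1, and wherever it is 1 monotonicity
forces the second to be 0 or 1 as well; so the product is almost surely the indicator of `{C1,C2}`.
-/

theorem sub_eq_zero_or_one_of_le {R : Type*} [AddGroupWithOne R] [PartialOrder R]
    [ZeroLEOneClass R] [NeZero (1 : R)] {a b : R} (ha : a = 0 ∨ a = 1) (hb : b = 0 ∨ b = 1)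
    (hab : a ≤ b) : b - a = 0 ∨ b - a = 1 := by
  rcases ha with rfl | rfl <;> rcases hb with rfl | rfl
  · exact .inl (sub_self 0)
  · exact .inr (sub_zero 1)
  · exact absurd hab zero_lt_one.not_ge
  · exact .inl (sub_self 1)

section Conditioning

variable {μ : Measure Ω}

theorem measure_preimage_singleton_ne_zero_of_forall_eq_or_eq [IsProbabilityMeasure μ]
    {β : Type*} {X : Ω → β} {a b : β} (hX : ∀ ω, X ω = a ∨ X ω = b) (hb : μ (X ⁻¹' {b}) < 1) :
    μ (X ⁻¹' {a}) ≠ 0 := by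
  intro ha
  have hcover : X ⁻¹' {a} ∪ X ⁻¹' {b} = Set.univ := Set.eq_univ_of_forall hX
  have hle : μ (X ⁻¹' {a} ∪ X ⁻¹' {b}) ≤ μ (X ⁻¹' {b}) := by
    simpa only [ha, zero_add] using measure_union_le (μ := μ) (X ⁻¹' {a}) (X ⁻¹' {b})
  rw [hcover, measure_univ] at hle
  exact hb.not_ge hle

variable [IsFiniteMeasure μ]

section IndepFun

variable {𝓧 𝓦 E : Type*} [MeasurableSpace 𝓧] [MeasurableSpace 𝓦]
  [NormedAddCommGroup E] [NormedSpace ℝ E] {X : Ω → 𝓧} {W : Ω → 𝓦} {f : 𝓧 → E} {t : Set 𝓦}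

theorem integral_cond_preimage_eq_of_indepFun (hXW : IndepFun X W μ)
    (hX : AEMeasurable X μ) (hf : AEStronglyMeasurable f (μ.map X))
    (hW : Measurable W) (ht : MeasurableSet t) (hμt : μ (W ⁻¹' t) ≠ 0) :
    ∫ ω, f (X ω) ∂(μ[|W ⁻¹' t]) = ∫ ω, f (X ω) ∂μ := by
  have hset : ∫ ω in W ⁻¹' t, f (X ω) ∂μ = μ.real (W ⁻¹' t) • ∫ ω, f (X ω) ∂μ :=
    Indep.setIntegral_eq_smul hW.comap_le hXW.symm hX ⟨t, ht, rfl⟩ hf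
  have hreal : μ.real (W ⁻¹' t) ≠ 0 := by rwa [measureReal_ne_zero_iff]
  rw [ProbabilityTheory.cond, integral_smul_measure, hset, ENNReal.toReal_inv, ← Measure.real_def,
    inv_smul_smul₀ hreal]

theorem integral_cond_preimage_eq_of_eqOn_of_indepFun {A : Ω → E}
    (hA : Set.EqOn A (f ∘ X) (W ⁻¹' t)) (hXW : IndepFun X W μ)
    (hX : AEMeasurable X μ) (hf : AEStronglyMeasurable f (μ.map X))
    (hW : Measurable W) (ht : MeasurableSet t) (hμt : μ (W ⁻¹' t) ≠ 0) :
    ∫ ω, A ω ∂(μ[|W ⁻¹' t]) = ∫ ω, f (X ω) ∂μ :=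
  calc ∫ ω, A ω ∂(μ[|W ⁻¹' t])
      = ∫ ω, f (X ω) ∂(μ[|W ⁻¹' t]) := integral_congr_ae (ae_cond_of_forall_mem (hW ht) hA)
    _ = ∫ ω, f (X ω) ∂μ := integral_cond_preimage_eq_of_indepFun hXW hX hf hW ht hμt

end IndepFun

theorem dE_eq_integral_sub {Z A A₁ A₀ : Ω → ℝ} (hZ : Measurable Z)
    (hZ1 : μ (Z ⁻¹' {1}) ≠ 0) (hZ0 : μ (Z ⁻¹' {0}) ≠ 0)
    (hA₁ : Integrable A₁ μ) (hA₀ : Integrable A₀ μ)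
    (hA₁Z : IndepFun A₁ Z μ) (hA₀Z : IndepFun A₀ Z μ)
    (h1 : Set.EqOn A A₁ (Z ⁻¹' {1})) (h0 : Set.EqOn A A₀ (Z ⁻¹' {0})) :
    dE μ Z A = ∫ ω, (A₁ ω - A₀ ω) ∂μ := by
  have hE1 : ∫ ω, A ω ∂(μ[|Z ⁻¹' {1}]) = ∫ ω, A₁ ω ∂μ :=
    integral_cond_preimage_eq_of_eqOn_of_indepFun (f := id) h1 hA₁Z hA₁.aemeasurable
      aestronglyMeasurable_id hZ (measurableSet_singleton 1) hZ1
  have hE0 : ∫ ω, A ω ∂(μ[|Z ⁻¹' {0}]) = ∫ ω, A₀ ω ∂μ :=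
    integral_cond_preimage_eq_of_eqOn_of_indepFun (f := id) h0 hA₀Z hA₀.aemeasurable
      aestronglyMeasurable_id hZ (measurableSet_singleton 0) hZ0
  rw [dE, hE1, hE0, integral_sub hA₁ hA₀]

end Conditioning

/-- The second treatment `D2(z, D1(z))` realized when the instrument is set to `z` and the first
treatment responds to it. As in `obsD2`, the case distinction on `D1(z) ∈ {0,1}` is encoded by the
weights `D1(z)` and `1 − D1(z)`. -/
def potD2 {α : Type*} (D1 : Bool → α → ℝ) (D2 : Bool → Bool → α → ℝ) (z : Bool) (ω : α) : ℝ :=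
  D2 z true ω * D1 z ω + D2 z false ω * (1 - D1 z ω)

section PotentialTreatment

variable {α : Type*} {Z : α → ℝ} {D1 : Bool → α → ℝ} {D2 : Bool → Bool → α → ℝ} {ω : α}

theorem obsD2_eq_potD2_true (hZ : Z ω = 1) : obsD2 Z D1 D2 ω = potD2 D1 D2 true ω := by
  simp [obsD2, obsD1, potD2, hZ]

theorem obsD2_eq_potD2_false (hZ : Z ω = 0) : obsD2 Z D1 D2 ω = potD2 D1 D2 false ω := by
  simp [obsD2, obsD1, potD2, hZ]

theorem potD2_eq_zero_or_one {z : Bool} (hD1 : D1 z ω = 0 ∨ D1 z ω = 1)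
    (hD2 : ∀ d, D2 z d ω = 0 ∨ D2 z d ω = 1) :
    potD2 D1 D2 z ω = 0 ∨ potD2 D1 D2 z ω = 1 := by
  rcases hD1 with h | h <;> simp [potD2, h, hD2]

theorem potD2_sub_potD2_eq_mul (hexcl : ∀ d, D2 true d ω = D2 false d ω) :
    potD2 D1 D2 true ω - potD2 D1 D2 false ω =
      (D1 true ω - D1 false ω) * (D2 true true ω - D2 false false ω) := by
  simp only [potD2, hexcl]
  ring

theorem potD2_sub_potD2_eq_indicator_CCev
    (hD1_01 : ∀ z, D1 z ω = 0 ∨ D1 z ω = 1) (hD2_01 : ∀ z d, D2 z d ω = 0 ∨ D2 z d ω = 1)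
    (hmono1 : D1 false ω ≤ D1 true ω) (hmono2 : potD2 D1 D2 false ω ≤ potD2 D1 D2 true ω)
    (hexcl : ∀ d, D2 true d ω = D2 false d ω) :
    potD2 D1 D2 true ω - potD2 D1 D2 false ω = (CCev D1 D2).indicator 1 ω := by
  have hfactor := potD2_sub_potD2_eq_mul (D1 := D1) hexcl
  rcases sub_eq_zero_or_one_of_le (hD1_01 false) (hD1_01 true) hmono1 with hD1 | hD1
  · simp [hfactor, CCev, hD1]
  · rw [hD1, one_mul] at hfactor
    have hD2_le : D2 false false ω ≤ D2 true true ω := by linarith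
    rcases sub_eq_zero_or_one_of_le (hD2_01 false false) (hD2_01 true true) hD2_le with
      hD2 | hD2
    all_goals simp [hfactor, CCev, hD1, hD2]

end PotentialTreatment

section RandomPotentialTreatment

variable {μ : Measure Ω} {D1 : Bool → Ω → ℝ} {D2 : Bool → Bool → Ω → ℝ}

theorem measurable_potD2 {z : Bool} (hD1 : Measurable (D1 z)) (hD2 : ∀ d, Measurable (D2 z d)) :
    Measurable (potD2 D1 D2 z) :=
  ((hD2 true).mul hD1).add ((hD2 false).mul (measurable_const.sub hD1))

theorem integrable_potD2 [IsFiniteMeasure μ] {z : Bool}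
    (hD1 : Measurable (D1 z)) (hD2 : ∀ d, Measurable (D2 z d))
    (hD1_01 : ∀ ω, D1 z ω = 0 ∨ D1 z ω = 1) (hD2_01 : ∀ d ω, D2 z d ω = 0 ∨ D2 z d ω = 1) :
    Integrable (potD2 D1 D2 z) μ := by
  refine .of_bound (measurable_potD2 hD1 hD2).aestronglyMeasurable 1 (.of_forall fun ω => ?_)
  rcases potD2_eq_zero_or_one (hD1_01 ω) (hD2_01 · ω) with h | h <;> simp [h]

theorem indepFun_potD2 {β γ : Type*} [MeasurableSpace β] [MeasurableSpace γ]
    {V : Ω → β} {W : Ω → γ}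
    (h : IndepFun (fun ω => ((fun b => D1 b ω), (fun b b' => D2 b b' ω), V ω)) W μ) (z : Bool) :
    IndepFun (potD2 D1 D2 z) W μ :=
  h.comp (φ := potD2 (fun b (p : (Bool → ℝ) × (Bool → Bool → ℝ) × β) => p.1 b)
      (fun b b' p => p.2.1 b b') z)
    (measurable_potD2 (by fun_prop) (by fun_prop)) measurable_id

end RandomPotentialTreatment

theorem stmt_7_general {μ : Measure Ω} [IsProbabilityMeasure μ]
    {Z : Ω → ℝ} {D1 : Bool → Ω → ℝ} {D2 : Bool → Bool → Ω → ℝ}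
    (hZ : Measurable Z) (hD1 : ∀ z, Measurable (D1 z)) (hD2 : ∀ z d, Measurable (D2 z d))
    (hZ1 : μ (Z ⁻¹' {1}) ≠ 0) (hZ0 : μ (Z ⁻¹' {0}) ≠ 0)
    (hD1_01 : ∀ z ω, D1 z ω = 0 ∨ D1 z ω = 1) (hD2_01 : ∀ z d ω, D2 z d ω = 0 ∨ D2 z d ω = 1)
    (hindep : ∀ z, IndepFun (potD2 D1 D2 z) Z μ)
    (hmono1 : ∀ᵐ ω ∂μ, D1 false ω ≤ D1 true ω)
    (hmono2 : ∀ᵐ ω ∂μ, potD2 D1 D2 false ω ≤ potD2 D1 D2 true ω)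
    (hexcl : ∀ d, ∀ᵐ ω ∂μ, D2 true d ω = D2 false d ω) :
    dE μ Z (obsD2 Z D1 D2) = μ.real (CCev D1 D2) := by
  have hint (z : Bool) : Integrable (potD2 D1 D2 z) μ :=
    integrable_potD2 (hD1 z) (hD2 z) (hD1_01 z) (hD2_01 z)
  calc dE μ Z (obsD2 Z D1 D2)
      = ∫ ω, (potD2 D1 D2 true ω - potD2 D1 D2 false ω) ∂μ :=
        dE_eq_integral_sub hZ hZ1 hZ0 (hint true) (hint false) (hindep true) (hindep false)
          (fun _ => obsD2_eq_potD2_true) (fun _ => obsD2_eq_potD2_false)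
    _ = ∫ ω, (CCev D1 D2).indicator 1 ω ∂μ := by
        refine integral_congr_ae ?_
        filter_upwards [hmono1, hmono2, ae_all_iff.mpr hexcl] with ω h1 h2 h3
        exact potD2_sub_potD2_eq_indicator_CCev (hD1_01 · ω) (hD2_01 · · ω) h1 h2 h3
    _ = μ.real (CCev D1 D2) := integral_indicator_one (measurableSet_CCev hD1 hD2)

theorem stmt_7
    (μ : Measure Ω) [IsProbabilityMeasure μ]
    (Z : Ω → ℝ) (D1 : Bool → Ω → ℝ) (D2 : Bool → Bool → Ω → ℝ)
    (Yp : Bool → Bool → Bool → Ω → ℝ)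
    (hZmeas : Measurable Z)
    (hD1meas : ∀ b, Measurable (D1 b))
    (hD2meas : ∀ b b', Measurable (D2 b b'))
    (hYmeas : ∀ z d1 d2, Measurable (Yp z d1 d2))
    (hYint : ∀ z d1 d2, Integrable (Yp z d1 d2) μ)
    (hZ01 : ∀ ω, Z ω = 0 ∨ Z ω = 1)
    (hZpos : 0 < μ (Z ⁻¹' {1})) (hZlt : μ (Z ⁻¹' {1}) < 1)
    (hD101 : ∀ b ω, D1 b ω = 0 ∨ D1 b ω = 1)
    (hD201 : ∀ b b' ω, D2 b b' ω = 0 ∨ D2 b b' ω = 1)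
    (hindep : IndepFun
      (fun ω => ((fun b => D1 b ω), (fun b b' => D2 b b' ω), (fun z d1 d2 => Yp z d1 d2 ω))) Z μ)
    (hrel1 : 0 < dE μ Z (obsD1 Z D1))
    (hrel2 : 0 < dE μ Z (obsD2 Z D1 D2))
    (hrelAnd : 0 < dE μ Z (obsDand Z D1 D2))
    (hrelOr : 0 < dE μ Z (obsDor Z D1 D2))
    (hmono1 : ∀ᵐ ω ∂μ, D1 false ω ≤ D1 true ω)
    (hmono2 : ∀ᵐ ω ∂μ,
      D2 false true ω * D1 false ω + D2 false false ω * (1 - D1 false ω) ≤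
        D2 true true ω * D1 true ω + D2 true false ω * (1 - D1 true ω))
    (hexcl : ∀ d1 d2, ∀ᵐ ω ∂μ, Yp true d1 d2 ω = Yp false d1 d2 ω)
    (hdexcl : ∀ d1, ∀ᵐ ω ∂μ, D2 true d1 ω = D2 false d1 ω) :
    dE μ Z (obsD2 Z D1 D2) = (μ (CCev D1 D2)).toReal :=
  stmt_7_general hZmeas hD1meas hD2meas hZpos.ne'
    (measure_preimage_singleton_ne_zero_of_forall_eq_or_eq hZ01 hZlt)
    hD101 hD201 (indepFun_potD2 hindep) hmono1 hmono2 hdexcl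
end
end
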